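/- arXiv:1306.1994 — 2 statements merged into one kernel-verified Lean document; each statement's English description precedes it below -/
import Mathlib

section
/- Let F be a field with char F ≠ 2, A = F[t, t⁻¹] the algebra of Laurent polynomials over F, and λ ∈ F with λ ≠ 0. Define the trilinear bracket [·,·,·]_{ω_λ,δ} on A determined on monomials by [t^l, t^m, t^n]_{ω_λ,δ} = λ^l(n−m)·t^{m+n−l} + λ^m(l−n)·t^{n+l−m} + λ^n(m−l)·t^{l+m−n} for all l, m, n ∈ ℤ (where λ^l denotes the integer power of the unit λ). Then this bracket is skew-symmetric and satisfies the fundamental identity; hence (A, [·,·,·]_{ω_λ,δ}) is a 3-Lie algebra. -/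
open LaurentPolynomial

/-!
Let `ω` be the endomorphism `t^l ↦ λ^l t^{-l}` and `δ = t d/dt` the Euler derivation. Then `ω` is
involutive, `δ ω = -ω δ`, and the bracket of `x, y, z` is the determinant with columns
`(ω x, x, δ x)`, `(ω y, y, δ y)`, `(ω z, z, δ z)`. Over any commutative algebra with such a pair
`ω, δ`, this determinant satisfies the fundamental identity: `ω` turns its rows `ω, id, δ` into
`id, ω, ω δ`, while `δ` gives the difference of the determinants with rows `ω, id, δ²` and
`ω δ, id, δ`, after which the fundamental identity is a polynomial identity.
-/

section TripleDet

variable {R M A : Type*} [CommSemiring R] [AddCommMonoid M] [Module R M] [CommRing A] [Algebra R A]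

/-- The trilinear map sending `(x, y, z)` to the determinant with columns `(p x, q x, r x)`,
`(p y, q y, r y)` and `(p z, q z, r z)`, encoded by expansion along its last column. -/
def tripleDet (p q r : M →ₗ[R] A) : M →ₗ[R] M →ₗ[R] M →ₗ[R] A :=
  let minor (s t : M →ₗ[R] A) : M →ₗ[R] M →ₗ[R] A :=
    (LinearMap.mul R A).compl₁₂ s t - (LinearMap.mul R A).compl₁₂ t s
  (minor q r).compr₂ ((LinearMap.mul R A).compl₂ p) +
    (minor r p).compr₂ ((LinearMap.mul R A).compl₂ q) +
    (minor p q).compr₂ ((LinearMap.mul R A).compl₂ r)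

variable (p q r : M →ₗ[R] A) (x y z : M)

theorem tripleDet_apply :
    tripleDet p q r x y z =
      (q x * r y - r x * q y) * p z + (r x * p y - p x * r y) * q z +
        (p x * q y - q x * p y) * r z :=
  rfl

theorem tripleDet_swap_left : tripleDet p q r y x z = -tripleDet p q r x y z := by
  simp only [tripleDet_apply]
  ring

theorem tripleDet_swap_right : tripleDet p q r x z y = -tripleDet p q r x y z := by
  simp only [tripleDet_apply]
  ring

theorem tripleDet_swap_outer : tripleDet p q r z y x = -tripleDet p q r x y z := by
  simp only [tripleDet_apply]
  ring

theorem map_tripleDet {B : Type*} [CommRing B] [Algebra R B] (φ : A →ₐ[R] B) :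
    φ (tripleDet p q r x y z) =
      tripleDet (φ.toLinearMap ∘ₗ p) (φ.toLinearMap ∘ₗ q) (φ.toLinearMap ∘ₗ r) x y z := by
  simp only [tripleDet_apply, map_add, map_sub, map_mul, LinearMap.comp_apply,
    AlgHom.toLinearMap_apply]

theorem derivation_tripleDet (D : Derivation R A A) :
    D (tripleDet p q r x y z) =
      tripleDet (D ∘ₗ p) q r x y z + tripleDet p (D ∘ₗ q) r x y z +
        tripleDet p q (D ∘ₗ r) x y z := by
  simp only [tripleDet_apply, map_add, map_sub, Derivation.leibniz, smul_eq_mul,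
    LinearMap.comp_apply, Derivation.coeFn_coe]
  ring

end TripleDet

section TwistedBracket

variable {R A : Type*} [CommSemiring R] [CommRing A] [Algebra R A]

/-- The bracket `[x, y, z]_{ω, D}` attached to an endomorphism `ω` and a derivation `D`: the
determinant whose rows are the values of `ω`, the identity and `D` at `x, y, z`. -/
def twistedBracket (ω : A →ₐ[R] A) (D : Derivation R A A) : A →ₗ[R] A →ₗ[R] A →ₗ[R] A :=
  tripleDet ω.toLinearMap LinearMap.id D

variable {ω : A →ₐ[R] A} {D : Derivation R A A}

theorem twistedBracket_apply (x y z : A) :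
    twistedBracket ω D x y z =
      (x * D y - D x * y) * ω z + (D x * ω y - ω x * D y) * z + (ω x * y - x * ω y) * D z :=
  rfl

theorem map_twistedBracket (hω : Function.Involutive ω) (x y z : A) :
    ω (twistedBracket ω D x y z) =
      tripleDet LinearMap.id ω.toLinearMap (ω.toLinearMap ∘ₗ D) x y z := by
  have hωω : ω.toLinearMap ∘ₗ ω.toLinearMap = LinearMap.id := LinearMap.ext hω
  rw [twistedBracket, map_tripleDet, hωω, LinearMap.comp_id]

theorem derivation_twistedBracket (hD : ∀ a, D (ω a) = -ω (D a)) (x y z : A) :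
    D (twistedBracket ω D x y z) =
      tripleDet ω.toLinearMap LinearMap.id (D.toLinearMap ∘ₗ D) x y z -
        tripleDet (ω.toLinearMap ∘ₗ D) LinearMap.id D x y z := by
  have hDω : D ∘ₗ ω.toLinearMap = -(ω.toLinearMap ∘ₗ D) := LinearMap.ext hD
  -- The remaining Leibniz term, with rows `ω, D, D`, vanishes.
  rw [twistedBracket, derivation_tripleDet, hDω]
  simp only [tripleDet_apply, LinearMap.neg_apply, LinearMap.comp_apply, LinearMap.id_apply,
    Derivation.coeFn_coe]
  ring

theorem twistedBracket_fundamental_identity (hω : Function.Involutive ω)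
    (hD : ∀ a, D (ω a) = -ω (D a)) (x₁ x₂ x₃ y z : A) :
    twistedBracket ω D (twistedBracket ω D x₁ x₂ x₃) y z =
      twistedBracket ω D (twistedBracket ω D x₁ y z) x₂ x₃ +
      twistedBracket ω D x₁ (twistedBracket ω D x₂ y z) x₃ +
      twistedBracket ω D x₁ x₂ (twistedBracket ω D x₃ y z) := by
  -- Only the outer brackets are expanded, so that `ω` and `D` still meet whole inner brackets.
  simp only [twistedBracket_apply (twistedBracket ω D _ _ _),
    twistedBracket_apply _ (twistedBracket ω D _ _ _),
    twistedBracket_apply _ _ (twistedBracket ω D _ _ _),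
    map_twistedBracket hω, derivation_twistedBracket hD]
  simp only [twistedBracket_apply, tripleDet_apply, LinearMap.comp_apply, LinearMap.id_apply,
    AlgHom.toLinearMap_apply, Derivation.coeFn_coe]
  ring

end TwistedBracket

section Laurent

variable {R : Type*} [CommRing R]

variable (R) in
/-- The `R`-basis of the Laurent polynomials given by the monomials `t ^ n`. -/
noncomputable def monomialBasis : Module.Basis ℤ R R[T;T⁻¹] :=
  AddMonoidAlgebra.basis ℤ R

theorem monomialBasis_apply (n : ℤ) : monomialBasis R n = T n :=
  AddMonoidAlgebra.basis_apply R n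

variable (R) in
/-- The Euler operator `t d/dt`, as a linear map. -/
noncomputable def eulerLinearMap : R[T;T⁻¹] →ₗ[R] R[T;T⁻¹] :=
  (monomialBasis R).constr R fun n ↦ (n : R) • T n

theorem eulerLinearMap_T (n : ℤ) : eulerLinearMap R (T n) = (n : R) • T n := by
  rw [← monomialBasis_apply, eulerLinearMap, Module.Basis.constr_basis, monomialBasis_apply]

theorem eulerLinearMap_mul (a b : R[T;T⁻¹]) :
    eulerLinearMap R (a * b) = a • eulerLinearMap R b + b • eulerLinearMap R a := by
  have leibniz : (LinearMap.mul R R[T;T⁻¹]).compr₂ (eulerLinearMap R) =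
      (LinearMap.mul R R[T;T⁻¹]).compl₂ (eulerLinearMap R) +
        ((LinearMap.mul R R[T;T⁻¹]).compl₂ (eulerLinearMap R)).flip :=
    LinearMap.ext_basis (monomialBasis R) (monomialBasis R) fun m n ↦ by
      simp only [LinearMap.add_apply, LinearMap.compr₂_apply, LinearMap.compl₂_apply,
        LinearMap.flip_apply, LinearMap.mul_apply', monomialBasis_apply, eulerLinearMap_T,
        ← T_add, mul_smul_comm, Int.cast_add, add_smul, add_comm n m]
      exact add_comm _ _
  exact LinearMap.congr_fun₂ leibniz a b

variable (R) in
/-- The Euler operator `t d/dt`, as a derivation. -/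
noncomputable def eulerDerivation : Derivation R R[T;T⁻¹] R[T;T⁻¹] :=
  Derivation.mk' (eulerLinearMap R) eulerLinearMap_mul

theorem eulerDerivation_T (n : ℤ) : eulerDerivation R (T n) = (n : R) • T n :=
  eulerLinearMap_T n

/-- The algebra endomorphism `t ^ n ↦ u ^ n t ^ (-n)`: for `u = λ`, the involution `ω_λ` of the
bracket. -/
noncomputable def scaledInvert (u : Rˣ) : R[T;T⁻¹] →ₐ[R] R[T;T⁻¹] :=
  AddMonoidAlgebra.lift R R[T;T⁻¹] ℤ
    { toFun n := ((u ^ n.toAdd : Rˣ) : R) • T (-n.toAdd)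
      map_one' := by simp
      map_mul' m n := by
        rw [toAdd_mul, zpow_add, neg_add, T_add, Units.val_mul, smul_mul_smul_comm] }

theorem scaledInvert_T (u : Rˣ) (n : ℤ) :
    scaledInvert u (T n) = ((u ^ n : Rˣ) : R) • T (-n) :=
  (AddMonoidAlgebra.lift_single ..).trans (one_smul ..)

theorem scaledInvert_involutive (u : Rˣ) : Function.Involutive (scaledInvert u) := by
  have comp_self : (scaledInvert u).toLinearMap ∘ₗ (scaledInvert u).toLinearMap = LinearMap.id :=
    (monomialBasis R).ext fun n ↦ by
      simp [monomialBasis_apply, scaledInvert_T, smul_smul, ← Units.val_mul]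
  exact DFunLike.congr_fun comp_self

theorem eulerDerivation_scaledInvert (u : Rˣ) (a : R[T;T⁻¹]) :
    eulerDerivation R (scaledInvert u a) = -scaledInvert u (eulerDerivation R a) := by
  have anticommute : (eulerDerivation R).toLinearMap ∘ₗ (scaledInvert u).toLinearMap =
      -((scaledInvert u).toLinearMap ∘ₗ (eulerDerivation R).toLinearMap) :=
    (monomialBasis R).ext fun n ↦ by
      simp [monomialBasis_apply, scaledInvert_T, eulerDerivation_T, smul_smul, mul_comm]
  exact DFunLike.congr_fun anticommute a

theorem twistedBracket_scaledInvert_eulerDerivation_T (u : Rˣ) (l m n : ℤ) :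
    twistedBracket (scaledInvert u) (eulerDerivation R) (T l) (T m) (T n) =
      (((u ^ l : Rˣ) : R) * ((n : R) - (m : R))) • (T (m + n - l) : R[T;T⁻¹]) +
      (((u ^ m : Rˣ) : R) * ((l : R) - (n : R))) • (T (n + l - m) : R[T;T⁻¹]) +
      (((u ^ n : Rˣ) : R) * ((m : R) - (l : R))) • (T (l + m - n) : R[T;T⁻¹]) := by
  simp only [twistedBracket_apply, scaledInvert_T, eulerDerivation_T, sub_eq_add_neg, T_add,
    smul_eq_C_mul, map_mul, map_add, map_neg]
  ring

end Laurent

theorem stmt_14_general {R : Type*} [CommRing R] (u : Rˣ)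
    (f : R[T;T⁻¹] →ₗ[R] R[T;T⁻¹] →ₗ[R] R[T;T⁻¹] →ₗ[R] R[T;T⁻¹])
    (hf : ∀ l m n : ℤ, f (T l) (T m) (T n) =
      (((u ^ l : Rˣ) : R) * ((n : R) - (m : R))) • (T (m + n - l) : R[T;T⁻¹]) +
      (((u ^ m : Rˣ) : R) * ((l : R) - (n : R))) • (T (n + l - m) : R[T;T⁻¹]) +
      (((u ^ n : Rˣ) : R) * ((m : R) - (l : R))) • (T (l + m - n) : R[T;T⁻¹])) :
    ((∀ x y z : R[T;T⁻¹], f y x z = -f x y z) ∧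
     (∀ x y z : R[T;T⁻¹], f x z y = -f x y z) ∧
     (∀ x y z : R[T;T⁻¹], f z y x = -f x y z)) ∧
    (∀ x₁ x₂ x₃ y z : R[T;T⁻¹],
      f (f x₁ x₂ x₃) y z =
        f (f x₁ y z) x₂ x₃ + f x₁ (f x₂ y z) x₃ + f x₁ x₂ (f x₃ y z)) := by
  have f_eq : f = twistedBracket (scaledInvert u) (eulerDerivation R) :=
    (monomialBasis R).ext fun l ↦ (monomialBasis R).ext fun m ↦ (monomialBasis R).ext fun n ↦ by
      simp only [monomialBasis_apply, hf, twistedBracket_scaledInvert_eulerDerivation_T]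
  subst f_eq
  exact ⟨⟨tripleDet_swap_left _ _ _, tripleDet_swap_right _ _ _, tripleDet_swap_outer _ _ _⟩,
    twistedBracket_fundamental_identity (scaledInvert_involutive u)
      (eulerDerivation_scaledInvert u)⟩

/-- For char F ≠ 2 and `λ ≠ 0`, the trilinear bracket on `A = F[t,t⁻¹]`
determined on monomials by
`[t^l, t^m, t^n] = λ^l(n−m)·t^{m+n−l} + λ^m(l−n)·t^{n+l−m} + λ^n(m−l)·t^{l+m−n}`
is skew-symmetric and satisfies the fundamental identity, making `A` a 3-Lie algebra. -/
theorem stmt_14 (F : Type*) [Field F] (h2 : (2 : F) ≠ 0)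
    (lam : F) (hlam : lam ≠ 0)
    (f : LaurentPolynomial F →ₗ[F] LaurentPolynomial F →ₗ[F] LaurentPolynomial F →ₗ[F]
      LaurentPolynomial F)
    (hf : ∀ l m n : ℤ, f (T l) (T m) (T n) =
      (lam ^ l * ((n : F) - (m : F))) • (T (m + n - l) : LaurentPolynomial F) +
      (lam ^ m * ((l : F) - (n : F))) • (T (n + l - m) : LaurentPolynomial F) +
      (lam ^ n * ((m : F) - (l : F))) • (T (l + m - n) : LaurentPolynomial F)) :
    ((∀ x y z : LaurentPolynomial F, f y x z = - f x y z) ∧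
     (∀ x y z : LaurentPolynomial F, f x z y = - f x y z) ∧
     (∀ x y z : LaurentPolynomial F, f z y x = - f x y z)) ∧
    (∀ x₁ x₂ x₃ y z : LaurentPolynomial F,
      f (f x₁ x₂ x₃) y z =
        f (f x₁ y z) x₂ x₃ + f x₁ (f x₂ y z) x₃ + f x₁ x₂ (f x₃ y z)) :=
  stmt_14_general (Units.mk0 lam hlam) f (by simpa using hf)
end

section
/- Let F be a field of characteristic p > 2 and A = F[t, t⁻¹] the algebra of Laurent polynomials over F, equipped with the trilinear bracket [·,·,·]_{ω,δ_0} determined on monomials by [t^l, t^m, t^n]_{ω,δ_0} = ((−1)^l(n−m) + (−1)^m(l−n) + (−1)^n(m−l))·t^{l+m+n−1}, and let J₁ = {(t^p − t^{−p})·h(t) : h(t) ∈ A}. Then: (i) J₁ is a nonzero proper ideal of (A, [·,·,·]_{ω,δ_0}), i.e., J₁ ≠ 0, J₁ ≠ A, and [x,y,z]_{ω,δ_0} ∈ J₁ whenever x ∈ J₁ and y, z ∈ A; (ii) the quotient 3-Lie algebra A/J₁ (of dimension 2p over F) is simple; equivalently, every F-subspace I with J₁ ⊆ I ⊆ A and [x,y,z]_{ω,δ_0}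 ∈ I for all x ∈ I and y, z ∈ A satisfies I = J₁ or I = A. -/
open LaurentPolynomial

/-!
Put `d = 2p`. Since `t^p - t^{-p} = t^{-p} (t^d - 1)`, the subspace `J₁` consists of the multiples
of `t^d - 1`. As `d` is even and vanishes in `F`, multiplication by `t^d` commutes with the bracket,
so `J₁` is an ideal.

For every `m` the operator `[·, t^m, t^{1-m}]` is diagonal on monomials. Comparing its eigenvalues
on `t^l` for `m = 0` and `m = 2` recovers `(-1)^l` and then `l` in `F`, that is, `l` modulo `d`.
Hence the `d` classes of monomials modulo `J₁` have distinct systems of eigenvalues, and an ideal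
strictly containing `J₁` contains a monomial. Since `[t^l, t^m, t^{m+2}]` is a nonzero multiple of
`t^{l+2m+1}` whenever `l - m` is odd, such an ideal contains every monomial.
-/

/- Subtracting from each operator its eigenvalue on one summand kills that summand, which reduces
the number of summands. -/
theorem mem_of_sum_mem_of_injOn_weights {K V ι κ : Type*} [Field K] [AddCommGroup V] [Module K V]
    {W : Submodule K V} {g : ι → Module.End K V} (hg : ∀ i, ∀ x ∈ W, g i x ∈ W)
    {χ : κ → ι → K} {s : Finset κ} (hχ : Set.InjOn χ s) {v : κ → V}
    (hv : ∀ i, ∀ k ∈ s, g i (v k) = χ k i • v k) (hsum : ∑ k ∈ s, v k ∈ W) :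
    ∀ k ∈ s, v k ∈ W := by
  classical
  induction s using Finset.induction_on generalizing v with
  | empty => simp
  | insert a s ha ih =>
    rw [Finset.coe_insert, Set.injOn_insert (by exact_mod_cast ha)] at hχ
    rw [Finset.forall_mem_insert]
    simp only [Finset.forall_mem_insert] at hv
    rw [Finset.sum_insert ha] at hsum
    have reduced_sum_mem (i : ι) : ∑ k ∈ s, (χ k i - χ a i) • v k ∈ W := by
      have h := sub_mem (hg i _ hsum) (W.smul_mem (χ a i) hsum)
      rw [map_add, map_sum, (hv i).1, Finset.sum_congr rfl (hv i).2, smul_add,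
        add_sub_add_left_eq_sub, Finset.smul_sum, ← Finset.sum_sub_distrib] at h
      simpa only [sub_smul] using h
    have mem_of_mem (b : κ) (hb : b ∈ s) : v b ∈ W := by
      obtain ⟨i, hi⟩ := Function.ne_iff.mp fun h : χ b = χ a => hχ.2 ⟨b, hb, h⟩
      refine (W.smul_mem_iff (sub_ne_zero.mpr hi)).mp
        (ih hχ.1 (v := fun k => (χ k i - χ a i) • v k) ?_ (reduced_sum_mem i) b hb)
      intro j k hk
      rw [map_smul, (hv j).2 k hk, smul_comm]
    exact ⟨(W.add_mem_iff_left (W.sum_mem mem_of_mem)).mp hsum, mem_of_mem⟩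

/-- The ideals of a ternary algebra `(V, f)`, where only the first argument of `f` ranges over the
subspace: for the skew-symmetric bracket of a 3-Lie algebra this loses nothing. -/
def IsTernaryIdeal {R V : Type*} [CommSemiring R] [AddCommMonoid V] [Module R V]
    (f : V →ₗ[R] V →ₗ[R] V →ₗ[R] V) (I : Submodule R V) : Prop :=
  ∀ x ∈ I, ∀ y z, f x y z ∈ I

section Monomials

variable {R : Type*} [Semiring R]

theorem span_range_T_eq_top : Submodule.span R (Set.range (T : ℤ → R[T;T⁻¹])) = ⊤ := by
  refine Submodule.eq_top_iff'.mpr fun x => ?_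
  induction x using LaurentPolynomial.induction_on' with
  | add x y hx hy => exact add_mem hx hy
  | C_mul_T n a =>
    rw [← smul_eq_C_mul]
    exact Submodule.smul_mem _ a (Submodule.subset_span ⟨n, rfl⟩)

theorem eq_top_of_forall_T_mem {I : Submodule R R[T;T⁻¹]} (h : ∀ n, T n ∈ I) : I = ⊤ := by
  rw [eq_top_iff, ← span_range_T_eq_top, Submodule.span_le]
  exact Set.range_subset_iff.mpr h

theorem linearMap_ext_T {M : Type*} [AddCommMonoid M] [Module R M] {g h : R[T;T⁻¹] →ₗ[R] M}
    (H : ∀ n, g (T n) = h (T n)) : g = h :=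
  LinearMap.ext_on_range span_range_T_eq_top H

theorem T_injective [Nontrivial R] : Function.Injective (T : ℤ → R[T;T⁻¹]) := fun m n h => by
  have hcoeff := congrArg (fun x : R[T;T⁻¹] => x.coeff n) h
  by_contra hmn
  simp [hmn] at hcoeff

end Monomials

section PeriodIdeal

variable (R : Type*) [CommRing R]

/-- The ideal `(t^d - 1)` of `R[t, t⁻¹]`, as a subspace: the kernel of the reduction of exponents
modulo `d`. The ideal `J₁` is the case `d = 2p`. -/
noncomputable def periodIdeal (d : ℤ) : Submodule R R[T;T⁻¹] :=
  (Ideal.span {T d - 1}).restrictScalars R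

variable {R}

theorem mem_periodIdeal {d : ℤ} {x : R[T;T⁻¹]} : x ∈ periodIdeal R d ↔ T d - 1 ∣ x :=
  Ideal.mem_span_singleton

theorem range_mulLeft_T_sub_T_neg (p : ℤ) :
    LinearMap.range (LinearMap.mulLeft R (T p - T (-p) : R[T;T⁻¹])) = periodIdeal R (2 * p) := by
  ext x
  have hfactor : (T p - T (-p) : R[T;T⁻¹]) = T (-p) * (T (2 * p) - 1) := by
    rw [mul_sub, ← T_add, mul_one]
    congr 2
    ring
  rw [mem_periodIdeal, ← (isUnit_T (-p)).mul_left_dvd, ← hfactor, LinearMap.mem_range]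
  simp only [LinearMap.mulLeft_apply, dvd_def, eq_comm]

theorem periodIdeal_ne_bot [Nontrivial R] {d : ℤ} (hd : d ≠ 0) : periodIdeal R d ≠ ⊥ := by
  intro h
  have hmem : (T d - 1 : R[T;T⁻¹]) ∈ periodIdeal R d := mem_periodIdeal.mpr dvd_rfl
  rw [h, Submodule.mem_bot, sub_eq_zero, ← T_zero] at hmem
  exact hd (T_injective hmem)

theorem periodIdeal_ne_top [Nontrivial R] (d : ℤ) : periodIdeal R d ≠ ⊤ := by
  intro h
  have hdvd : (T d - 1 : R[T;T⁻¹]) ∣ 1 := mem_periodIdeal.mp (h ▸ Submodule.mem_top)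
  simpa using map_dvd (eval₂ (RingHom.id R) (1 : Rˣ)) hdvd

theorem T_sub_one_dvd_T_mul_sub_one (d q : ℤ) : (T d - 1 : R[T;T⁻¹]) ∣ T (d * q) - 1 := by
  have natural_case (n : ℕ) : (T d - 1 : R[T;T⁻¹]) ∣ T (d * n) - 1 := by
    rw [mul_comm, ← T_pow]
    exact sub_one_dvd_pow_sub_one _ n
  obtain ⟨n, rfl | rfl⟩ := q.eq_nat_or_neg
  · exact natural_case n
  · have hneg : (T (d * -n) - 1 : R[T;T⁻¹]) = -T (d * -n) * (T (d * n) - 1) := by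
      rw [neg_mul, mul_sub, ← T_add, mul_one, mul_neg, neg_add_cancel, T_zero, neg_sub]
    exact hneg ▸ (natural_case n).mul_left _

theorem T_sub_T_mem_periodIdeal {d k l : ℤ} (h : k ≡ l [ZMOD d]) :
    (T l - T k : R[T;T⁻¹]) ∈ periodIdeal R d := by
  obtain ⟨q, hq⟩ := h.dvd
  have hfactor : (T l - T k : R[T;T⁻¹]) = T k * (T (d * q) - 1) := by
    rw [mul_sub, ← T_add, mul_one, ← hq, add_sub_cancel]
  exact mem_periodIdeal.mpr (hfactor ▸ (T_sub_one_dvd_T_mul_sub_one d q).mul_left _)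

theorem periodIdeal_sup_span_T_eq_top {d : ℤ} (hd : 0 < d) :
    periodIdeal R d ⊔ Submodule.span R (T '' (Finset.Ico 0 d : Set ℤ)) = ⊤ := by
  refine eq_top_of_forall_T_mem fun n => ?_
  rw [← sub_add_cancel (T n) (T (n % d))]
  refine Submodule.add_mem_sup (T_sub_T_mem_periodIdeal (Int.mod_modEq n d))
    (Submodule.subset_span ⟨n % d, ?_, rfl⟩)
  simpa using ⟨Int.emod_nonneg n hd.ne', Int.emod_lt_of_pos n hd⟩

theorem exists_sub_sum_smul_T_mem_periodIdeal {d : ℤ} (hd : 0 < d) (x : R[T;T⁻¹]) :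
    ∃ c : ℤ → R, x - ∑ k ∈ Finset.Ico 0 d, c k • T k ∈ periodIdeal R d := by
  have hx : x ∈ periodIdeal R d ⊔ Submodule.span R (T '' (Finset.Ico 0 d : Set ℤ)) :=
    periodIdeal_sup_span_T_eq_top (R := R) hd ▸ Submodule.mem_top
  obtain ⟨j, hj, s, hs, rfl⟩ := Submodule.mem_sup.mp hx
  obtain ⟨c, rfl⟩ := (Submodule.mem_span_image_finset_iff_exists_fun' R).mp hs
  exact ⟨c, by simpa using hj⟩

end PeriodIdeal

section BracketCoeff

variable (F : Type*) [Field F]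

/-- The structure constants of the bracket `[·,·,·]_{ω,δ₀}` in the basis of monomials. -/
def bracketCoeff (l m n : ℤ) : F :=
  (-1) ^ l * (n - m) + (-1) ^ m * (l - n) + (-1) ^ n * (m - l)

variable {F}

theorem bracketCoeff_rotate (l m n : ℤ) : bracketCoeff F l m n = bracketCoeff F n l m := by
  unfold bracketCoeff
  ring

theorem bracketCoeff_add_left {d : ℤ} (hd : Even d) (hd₀ : (d : F) = 0) (l m n : ℤ) :
    bracketCoeff F (d + l) m n = bracketCoeff F l m n := by
  simp [bracketCoeff, zpow_add₀, hd.neg_one_zpow, hd₀]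

theorem bracketCoeff_one_sub (l m : ℤ) :
    bracketCoeff F l m (1 - m) = (-1) ^ l * (1 - 2 * m) + (-1) ^ m * (2 * l - 1) := by
  have hsign : (-1 : F) ^ (1 - m) = -(-1) ^ m := by
    rw [sub_eq_add_neg, zpow_add₀ (by simp), zpow_neg, zpow_one, ← inv_zpow, inv_neg_one,
      neg_one_mul]
  rw [bracketCoeff, hsign]
  push_cast
  ring

theorem bracketCoeff_add_two (l m : ℤ) :
    bracketCoeff F l m (m + 2) = 2 * ((-1) ^ l - (-1) ^ m) := by
  have hsign : (-1 : F) ^ (m + 2) = (-1) ^ m := by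
    rw [zpow_add₀ (by simp), even_two.neg_one_zpow, mul_one]
  rw [bracketCoeff, hsign]
  push_cast
  ring

theorem neg_one_zpow_eq_iff (h₂ : (2 : F) ≠ 0) {l m : ℤ} :
    (-1 : F) ^ l = (-1) ^ m ↔ Even (l - m) := by
  have hne : (-1 : F) ≠ 1 := fun h => h₂ (by linear_combination -h)
  rw [neg_one_zpow_eq_ite, neg_one_zpow_eq_ite, Int.even_sub]
  by_cases hl : Even l <;> by_cases hm : Even m <;> simp [hl, hm, hne, hne.symm]

theorem bracketCoeff_add_two_ne_zero (h₂ : (2 : F) ≠ 0) {l m : ℤ} (h : ¬ Even (l - m)) :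
    bracketCoeff F l m (m + 2) ≠ 0 := by
  rw [bracketCoeff_add_two]
  exact mul_ne_zero h₂ (sub_ne_zero.mpr ((neg_one_zpow_eq_iff h₂).not.mpr h))

theorem two_ne_zero_of_odd_char {p : ℕ} [CharP F p] (hp : Odd p) : (2 : F) ≠ 0 := by
  refine Ring.two_ne_zero fun hchar => ?_
  rw [← ringChar.eq F p, hchar] at hp
  exact absurd hp (by decide)

theorem modEq_of_bracketCoeff_one_sub_eq {p : ℕ} [CharP F p] (hp : Odd p) {k l : ℤ}
    (h : ∀ m, bracketCoeff F k m (1 - m) = bracketCoeff F l m (1 - m)) :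
    k ≡ l [ZMOD 2 * p] := by
  have h₂ := two_ne_zero_of_odd_char (F := F) hp
  have h_at_zero := h 0
  have h_at_two := h 2
  simp only [bracketCoeff_one_sub, zpow_zero, even_two.neg_one_zpow, Int.cast_zero, Int.cast_ofNat]
    at h_at_zero h_at_two
  have hsign : (-1 : F) ^ l = (-1) ^ k :=
    mul_left_cancel₀ (mul_ne_zero h₂ h₂) (by linear_combination h_at_two - h_at_zero)
  have hcast : ((l - k : ℤ) : F) = 0 := by
    refine (mul_eq_zero.mp ?_).resolve_left h₂
    push_cast
    linear_combination -h_at_zero - hsign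
  have htwo : (2 : ℤ) ∣ l - k := even_iff_two_dvd.mp ((neg_one_zpow_eq_iff h₂).mp hsign)
  have hcoprime : IsCoprime (2 : ℤ) p :=
    Nat.isCoprime_iff_coprime.mpr (Nat.coprime_two_left.mpr hp)
  exact Int.modEq_iff_dvd.mpr
    (hcoprime.mul_dvd htwo ((CharP.intCast_eq_zero_iff F p _).mp hcast))

end BracketCoeff

/-- The trilinear map `f` on `F[t, t⁻¹]` is the bracket `[·,·,·]_{ω,δ₀}`, which is determined by its
values on monomials. -/
def IsOmegaBracket {F : Type*} [Field F]
    (f : F[T;T⁻¹] →ₗ[F] F[T;T⁻¹] →ₗ[F] F[T;T⁻¹] →ₗ[F] F[T;T⁻¹]) : Prop :=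
  ∀ l m n : ℤ, f (T l) (T m) (T n) = bracketCoeff F l m n • T (l + m + n - 1)

namespace IsOmegaBracket

variable {F : Type*} [Field F] {f : F[T;T⁻¹] →ₗ[F] F[T;T⁻¹] →ₗ[F] F[T;T⁻¹] →ₗ[F] F[T;T⁻¹]}
  {I : Submodule F F[T;T⁻¹]}

theorem apply_T_mul (hf : IsOmegaBracket f) {d : ℤ} (hd : Even d) (hd₀ : (d : F) = 0)
    (x y z : F[T;T⁻¹]) : f (T d * x) y z = T d * f x y z := by
  have maps_eq : f ∘ₗ LinearMap.mulLeft F (T d) =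
      f.compr₂ (LinearMap.compRight F (LinearMap.mulLeft F (T d))) := by
    refine linearMap_ext_T fun l => linearMap_ext_T fun m => linearMap_ext_T fun n => ?_
    change f (T d * T l) (T m) (T n) = T d * f (T l) (T m) (T n)
    rw [← T_add, hf, hf, bracketCoeff_add_left hd hd₀, mul_smul_comm, ← T_add]
    congr 2
    ring
  exact LinearMap.congr_fun₂ (LinearMap.congr_fun maps_eq x) y z

theorem isTernaryIdeal_periodIdeal (hf : IsOmegaBracket f) {d : ℤ} (hd : Even d)
    (hd₀ : (d : F) = 0) : IsTernaryIdeal f (periodIdeal F d) := by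
  intro x hx y z
  obtain ⟨h, rfl⟩ := mem_periodIdeal.mp hx
  refine mem_periodIdeal.mpr ⟨f h y z, ?_⟩
  simp only [sub_mul, one_mul, map_sub, LinearMap.sub_apply, hf.apply_T_mul hd hd₀]

theorem T_mem_of_bracketCoeff_ne_zero (hf : IsOmegaBracket f) (hI : IsTernaryIdeal f I)
    {l m n : ℤ} (hl : T l ∈ I) (h : bracketCoeff F l m n ≠ 0) : T (l + m + n - 1) ∈ I :=
  (I.smul_mem_iff h).mp (hf l m n ▸ hI _ hl (T m) (T n))

theorem eq_top_of_T_mem (hf : IsOmegaBracket f) (h₂ : (2 : F) ≠ 0) (hI : IsTernaryIdeal f I)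
    {k : ℤ} (hk : T k ∈ I) : I = ⊤ := by
  have same_parity (l : ℤ) (hl : Even (l - k)) : T l ∈ I := by
    have hne : bracketCoeff F k (k + 2) (l - 2 * k - 1) ≠ 0 := by
      rw [bracketCoeff_rotate]
      exact bracketCoeff_add_two_ne_zero h₂ (by grind)
    convert hf.T_mem_of_bracketCoeff_ne_zero hI hk hne using 2
    ring
  have opposite_parity (l : ℤ) (hl : ¬ Even (l - k)) : T l ∈ I := by
    have hne : bracketCoeff F (l - 2 * k - 3) (k + 1) (k + 1 + 2) ≠ 0 :=
      bracketCoeff_add_two_ne_zero h₂ (by grind)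
    convert hf.T_mem_of_bracketCoeff_ne_zero hI (same_parity _ (by grind)) hne using 2
    ring
  exact eq_top_of_forall_T_mem fun l => (em _).elim (same_parity l) (opposite_parity l)

theorem apply_T_T_one_sub (hf : IsOmegaBracket f) (l m : ℤ) :
    f (T l) (T m) (T (1 - m)) = bracketCoeff F l m (1 - m) • T l := by
  rw [hf]
  congr 2
  ring

theorem smul_T_mem_of_sum_mem (hf : IsOmegaBracket f) {p : ℕ} [CharP F p] (hp : Odd p)
    (hI : IsTernaryIdeal f I) {c : ℤ → F}
    (hsum : ∑ k ∈ Finset.Ico (0 : ℤ) (2 * p), c k • T k ∈ I) :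
    ∀ k ∈ Finset.Ico (0 : ℤ) (2 * p), c k • T k ∈ I := by
  refine mem_of_sum_mem_of_injOn_weights (g := fun m : ℤ => (f.flip (T m)).flip (T (1 - m)))
    (χ := fun k m => bracketCoeff F k m (1 - m)) (fun m x hx => hI x hx _ _) ?_ ?_ hsum
  · intro k hk l hl hkl
    rw [Finset.mem_coe, Finset.mem_Ico] at hk hl
    have hmod := modEq_of_bracketCoeff_one_sub_eq hp (congrFun hkl)
    rwa [Int.ModEq, Int.emod_eq_of_lt hk.1 hk.2, Int.emod_eq_of_lt hl.1 hl.2] at hmod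
  · intro m k _
    rw [map_smul, LinearMap.flip_apply, LinearMap.flip_apply, hf.apply_T_T_one_sub, smul_comm]

theorem exists_T_mem_of_periodIdeal_lt (hf : IsOmegaBracket f) {p : ℕ} [CharP F p]
    (hp : Odd p) (hI : IsTernaryIdeal f I) (hlt : periodIdeal F (2 * p) < I) :
    ∃ k, T k ∈ I := by
  obtain ⟨x, hxI, hxJ⟩ := SetLike.exists_of_lt hlt
  obtain ⟨c, hc⟩ := exists_sub_sum_smul_T_mem_periodIdeal (d := 2 * p) (by have := hp.pos; lia) x
  have hsum := (I.sub_mem_iff_right hxI).mp (hlt.le hc)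
  have hmem := hf.smul_T_mem_of_sum_mem hp hI hsum
  obtain ⟨k, hk, hck⟩ : ∃ k ∈ Finset.Ico (0 : ℤ) (2 * p), c k ≠ 0 := by
    by_contra! hzero
    rw [Finset.sum_eq_zero fun k hk => by rw [hzero k hk, zero_smul], sub_zero] at hc
    exact hxJ hc
  exact ⟨k, (I.smul_mem_iff hck).mp (hmem k hk)⟩

theorem eq_periodIdeal_or_eq_top (hf : IsOmegaBracket f) {p : ℕ} [CharP F p]
    (hp : Odd p) (hle : periodIdeal F (2 * p) ≤ I) (hI : IsTernaryIdeal f I) :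
    I = periodIdeal F (2 * p) ∨ I = ⊤ := by
  refine hle.eq_or_lt.imp Eq.symm fun hlt => ?_
  obtain ⟨k, hk⟩ := hf.exists_T_mem_of_periodIdeal_lt hp hI hlt
  exact hf.eq_top_of_T_mem (two_ne_zero_of_odd_char hp) hI hk

end IsOmegaBracket

/-- For char F = p > 2 and the bracket on `A = F[t,t⁻¹]` determined on
monomials by `[t^l,t^m,t^n] = ((−1)^l(n−m) + (−1)^m(l−n) + (−1)^n(m−l))·t^{l+m+n−1}`,
the subspace `J₁ = (t^p − t^{−p})·A` is a nonzero proper ideal, and the quotient 3-Lie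
algebra `A/J₁` is simple: every subspace `I` with `J₁ ⊆ I ⊆ A` closed under left
bracketing equals `J₁` or `A`. -/
theorem stmt_19 (F : Type*) [Field F] (p : ℕ) [CharP F p] (hp : 2 < p)
    (f : LaurentPolynomial F →ₗ[F] LaurentPolynomial F →ₗ[F] LaurentPolynomial F →ₗ[F]
      LaurentPolynomial F)
    (hf : ∀ l m n : ℤ, f (T l) (T m) (T n) =
      ((-1 : F) ^ l * ((n : F) - (m : F)) + (-1 : F) ^ m * ((l : F) - (n : F)) +
        (-1 : F) ^ n * ((m : F) - (l : F))) •
        (T (l + m + n - 1) : LaurentPolynomial F)) :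
    (LinearMap.range (LinearMap.mulLeft F
        ((T (p : ℤ) - T (-(p : ℤ))) : LaurentPolynomial F)) ≠ ⊥) ∧
    (LinearMap.range (LinearMap.mulLeft F
        ((T (p : ℤ) - T (-(p : ℤ))) : LaurentPolynomial F)) ≠ ⊤) ∧
    (∀ x ∈ LinearMap.range (LinearMap.mulLeft F
        ((T (p : ℤ) - T (-(p : ℤ))) : LaurentPolynomial F)),
      ∀ y z : LaurentPolynomial F,
        f x y z ∈ LinearMap.range (LinearMap.mulLeft F
          ((T (p : ℤ) - T (-(p : ℤ))) : LaurentPolynomial F))) ∧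
    (∀ I : Submodule F (LaurentPolynomial F),
      LinearMap.range (LinearMap.mulLeft F
        ((T (p : ℤ) - T (-(p : ℤ))) : LaurentPolynomial F)) ≤ I →
      (∀ x ∈ I, ∀ y z : LaurentPolynomial F, f x y z ∈ I) →
      I = LinearMap.range (LinearMap.mulLeft F
        ((T (p : ℤ) - T (-(p : ℤ))) : LaurentPolynomial F)) ∨ I = ⊤) := by
  have hprime : p.Prime := (CharP.char_is_prime_or_zero F p).resolve_right (by lia)
  have hodd : Odd p := hprime.odd_of_ne_two hp.ne'
  have hbracket : IsOmegaBracket f := hf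
  rw [range_mulLeft_T_sub_T_neg]
  exact ⟨periodIdeal_ne_bot (by lia), periodIdeal_ne_top _,
    hbracket.isTernaryIdeal_periodIdeal (even_two_mul _) (by simp),
    fun I hle hI => hbracket.eq_periodIdeal_or_eq_top hodd hle hI⟩
end
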